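/- Let α > 0 and let a, b, c be real numbers with ac − b² > 0 (hence b² + c² > 0). Let A : ℝ → ℝ be a smooth 1-periodic function with ∫₀¹ A(x) dx = −α·(ac − b²). Then there exists a smooth 1-periodic function φ : ℝ → ℝ with 1 + φ''(x) > 0 for all x, such that for all x ∈ ℝ: −(1/4)·(d²/dx²)(1/(1+φ''(x))) − α·b²·(ac − b²)·(1 + φ''(x))/(b² + c²) − α·c²·(ac − b²)/(b² + c²) = A(x). -/

import Mathlib

lemma aux_prim (r : ℝ → ℝ) (hr : ContDiff ℝ (⊤ : ℕ∞) r) (hp : Function.Periodic r 1)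
    (h0 : ∫ x in (0 : ℝ)..1, r x = 0) :
    ∃ p : ℝ → ℝ, ContDiff ℝ (⊤ : ℕ∞) p ∧ Function.Periodic p 1 ∧ (∀ x, HasDerivAt p (r x) x) ∧
      ∫ x in (0 : ℝ)..1, p x = 0 := by
  have hc := hr.continuous
  have hi : ∀ a b, IntervalIntegrable r MeasureTheory.volume a b := fun a b => hc.intervalIntegrable a b
  set P : ℝ → ℝ := fun x => ∫ t in (0 : ℝ)..x, r t with hP
  have hd : ∀ x, HasDerivAt P (r x) x := fun x =>
    intervalIntegral.integral_hasDerivAt_right (hi _ _)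
      (hc.stronglyMeasurableAtFilter _ _) hc.continuousAt
  have hPc : Continuous P := continuous_iff_continuousAt.2 fun x => (hd x).continuousAt
  set m := ∫ x in (0 : ℝ)..1, P x with hm
  have hd' : ∀ x, HasDerivAt (fun x => P x - m) (r x) x := fun x => (hd x).sub_const m
  refine ⟨fun x => P x - m, ?_, ?_, hd', ?_⟩
  · rw [contDiff_infty_iff_deriv]
    refine ⟨fun x => (hd' x).differentiableAt, ?_⟩
    have : deriv (fun x => P x - m) = r := funext fun x => (hd' x).deriv
    rw [this]; exact hr
  · intro x
    have h1 : P (x + 1) = P x + ∫ t in x..(x+1), r t :=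
      (intervalIntegral.integral_add_adjacent_intervals (hi _ _) (hi _ _)).symm
    have h2 := hp.intervalIntegral_add_eq x 0
    simp only [zero_add] at h2
    simp only [h1, h2, h0, add_zero]
  · rw [intervalIntegral.integral_sub (hPc.intervalIntegrable _ _) (by simp)]
    simp [hm]

lemma aux_prim2 (r : ℝ → ℝ) (hr : ContDiff ℝ (⊤ : ℕ∞) r) (hp : Function.Periodic r 1)
    (h0 : ∫ x in (0 : ℝ)..1, r x = 0) :
    ∃ p q : ℝ → ℝ, ContDiff ℝ (⊤ : ℕ∞) p ∧ Function.Periodic p 1 ∧ (∀ x, HasDerivAt p (q x) x) ∧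
      (∀ x, HasDerivAt q (r x) x) := by
  obtain ⟨q, hq, hqp, hqd, hq0⟩ := aux_prim r hr hp h0
  obtain ⟨p, hp, hpp, hpd, hp0⟩ := aux_prim q hq hqp hq0
  exact ⟨p, q, hp, hpp, hpd, hqd⟩

lemma aux_first (k : ℝ) (hk : k ≠ 0) (w : ℝ → ℝ) (hw : Continuous w) (hp : Function.Periodic w 1) :
    ∃ v : ℝ → ℝ, Function.Periodic v 1 ∧ ∀ x, HasDerivAt v (w x - k * v x) x := by
  set g : ℝ → ℝ := fun t => Real.exp (k * t) * w t with hg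
  have hc : Continuous g := by fun_prop
  have hi : ∀ a b, IntervalIntegrable g MeasureTheory.volume a b := fun a b => hc.intervalIntegrable a b
  set P : ℝ → ℝ := fun x => ∫ t in (0 : ℝ)..x, g t with hP
  have hd : ∀ x, HasDerivAt P (g x) x := fun x =>
    intervalIntegral.integral_hasDerivAt_right (hi _ _)
      (hc.stronglyMeasurableAtFilter _ _) hc.continuousAt
  have hne : Real.exp k - 1 ≠ 0 := by
    intro h
    have : Real.exp k = 1 := by linarith
    exact hk (Real.exp_eq_one_iff k |>.1 this)
  set C := P 1 / (Real.exp k - 1) with hC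
  have hCe : C * Real.exp k = C + P 1 := by
    rw [hC]; field_simp; ring
  refine ⟨fun x => Real.exp (-(k * x)) * (C + P x), ?_, ?_⟩
  · intro x
    have h1 : P (x + 1) = P 1 + Real.exp k * P x := by
      have e1 : P (x + 1) = P 1 + ∫ t in (1:ℝ)..(x+1), g t :=
        (intervalIntegral.integral_add_adjacent_intervals (hi _ _) (hi _ _)).symm
      have e2 : ∫ t in (1:ℝ)..(x+1), g t = ∫ t in (0:ℝ)..x, g (t + 1) := by
        rw [intervalIntegral.integral_comp_add_right]; simp
      rw [e1, e2, ← intervalIntegral.integral_const_mul]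
      congr 2
      funext t
      simp only [hg, hp t]
      rw [mul_add, Real.exp_add]; simp; ring
    have h2 : Real.exp (-(k * (x + 1))) * Real.exp k = Real.exp (-(k * x)) := by
      rw [← Real.exp_add]; ring_nf
    simp only
    rw [h1, ← h2]
    linear_combination -Real.exp (-(k * (x + 1))) * hCe
  · intro x
    have he : HasDerivAt (fun x => Real.exp (-(k * x))) (Real.exp (-(k*x)) * (-k)) x := by
      apply HasDerivAt.exp
      exact (((hasDerivAt_id x).const_mul k).neg).congr_deriv (by simp)
    have := he.mul ((hd x).const_add C)
    refine this.congr_deriv ?_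
    have h3 : Real.exp (-(k*x)) * Real.exp (k*x) = 1 := by rw [← Real.exp_add]; simp
    simp only [hg]
    linear_combination w x * h3

lemma aux_second (k : ℝ) (hk : k ≠ 0) (r : ℝ → ℝ) (hr : Continuous r) (hp : Function.Periodic r 1) :
    ∃ v v' : ℝ → ℝ, Function.Periodic v 1 ∧ (∀ x, HasDerivAt v (v' x) x) ∧
      ∀ x, HasDerivAt v' (k^2 * v x - r x) x := by
  obtain ⟨w, hwp, hwd⟩ := aux_first (-k) (neg_ne_zero.2 hk) (fun x => - r x) hr.neg
    (fun x => by simp [hp x])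
  have hwc : Continuous w := continuous_iff_continuousAt.2 fun x => (hwd x).continuousAt
  obtain ⟨v, hvp, hvd⟩ := aux_first k hk w hwc hwp
  refine ⟨v, fun x => w x - k * v x, hvp, hvd, fun x => ?_⟩
  exact ((hwd x).sub ((hvd x).const_mul k)).congr_deriv (by ring)

lemma aux_max (v v' v'' : ℝ → ℝ) (hp : Function.Periodic v 1) (h1 : ∀ x, HasDerivAt v (v' x) x)
    (h2 : ∀ x, HasDerivAt v' (v'' x) x) : ∃ x0, (∀ x, v x ≤ v x0) ∧ v' x0 = 0 ∧ v'' x0 ≤ 0 := by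
  have hc : Continuous v := continuous_iff_continuousAt.2 fun x => (h1 x).continuousAt
  obtain ⟨x0, -, hx0⟩ := isCompact_Icc.exists_isMaxOn (Set.nonempty_Icc.2 zero_le_one) (hc.continuousOn (s := Set.Icc (0:ℝ) 1))
  have hall : ∀ x, v x ≤ v x0 := by
    intro x
    obtain ⟨y, hy, hxy⟩ := hp.exists_mem_Ico₀ one_pos x
    rw [hxy]; exact hx0 (Set.Ico_subset_Icc_self hy)
  have hd1 : deriv v = v' := funext fun x => (h1 x).deriv
  have hmax : IsLocalMax v x0 := Filter.Eventually.of_forall hall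
  have h0 : v' x0 = 0 := hmax.hasDerivAt_eq_zero (h1 x0)
  refine ⟨x0, hall, h0, ?_⟩
  by_contra! hpos
  have hmin : IsLocalMin v x0 := by
    apply isLocalMin_of_deriv_deriv_pos
    · rw [hd1, (h2 x0).deriv]; exact hpos
    · rw [hd1, h0]
    · exact hc.continuousAt
  have he : v =ᶠ[nhds x0] fun _ => v x0 := by
    filter_upwards [hmin] with x hx using le_antisymm (hall x) hx
  have he2 : v' =ᶠ[nhds x0] fun _ => 0 := by
    have := he.deriv
    rw [hd1] at this
    simpa using this
  have := he2.deriv_eq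
  rw [(h2 x0).deriv] at this
  simp at this
  linarith

lemma aux_min (v v' v'' : ℝ → ℝ) (hp : Function.Periodic v 1) (h1 : ∀ x, HasDerivAt v (v' x) x)
    (h2 : ∀ x, HasDerivAt v' (v'' x) x) : ∃ x0, (∀ x, v x0 ≤ v x) ∧ v' x0 = 0 ∧ 0 ≤ v'' x0 := by
  obtain ⟨x0, a, b, c⟩ := aux_max (fun x => - v x) (fun x => - v' x) (fun x => - v'' x)
    (fun x => by simp [hp x]) (fun x => (h1 x).neg) (fun x => (h2 x).neg)
  exact ⟨x0, fun x => by linarith [a x], by linarith, by linarith⟩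

/-- linear sup estimate -/
lemma aux_bound (M R : ℝ) (hM : 0 < M) (v v' r : ℝ → ℝ) (hp : Function.Periodic v 1)
    (h1 : ∀ x, HasDerivAt v (v' x) x) (h2 : ∀ x, HasDerivAt v' (M * v x - r x) x)
    (hr : ∀ x, |r x| ≤ R) (x : ℝ) : |v x| ≤ R / M := by
  obtain ⟨a, ha, -, ha'⟩ := aux_max v v' _ hp h1 h2
  obtain ⟨b, hb, -, hb'⟩ := aux_min v v' _ hp h1 h2
  have r1 := abs_le.1 (hr a)
  have r2 := abs_le.1 (hr b)
  rw [abs_le, le_div_iff₀ hM, neg_le, ← sub_nonneg]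
  have := mul_le_mul_of_nonneg_left (ha x) hM.le
  have := mul_le_mul_of_nonneg_left (hb x) hM.le
  constructor
  · rw [sub_nonneg, le_div_iff₀ hM]; nlinarith
  · nlinarith

lemma aux_fixed (M L : ℝ) (hL0 : 0 ≤ L) (hLM : L < M) (N h : ℝ → ℝ)
    (hN : ∀ x y, |N x - N y| ≤ L * |x - y|) (hh : Continuous h) (hhp : Function.Periodic h 1) :
    ∃ v v' : ℝ → ℝ, Function.Periodic v 1 ∧ (∀ x, HasDerivAt v (v' x) x) ∧
      ∀ x, HasDerivAt v' (M * v x - N (v x) + h x) x := by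
  have hM : 0 < M := hL0.trans_lt hLM
  have hNc : Continuous N := by
    have : LipschitzWith L.toNNReal N := LipschitzWith.of_dist_le_mul fun x y => by
      rw [Real.coe_toNNReal _ hL0]; exact hN x y
    exact this.continuous
  have key : ∀ f : C(AddCircle (1:ℝ), ℝ), ∃ F : C(AddCircle (1:ℝ), ℝ), ∃ v' : ℝ → ℝ,
      (∀ x : ℝ, HasDerivAt (fun x : ℝ => F (x : AddCircle (1:ℝ))) (v' x) x) ∧
      (∀ x : ℝ, HasDerivAt v' (M * F (x : AddCircle (1:ℝ)) - (N (f (x : AddCircle (1:ℝ))) - h x)) x) := by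
    intro f
    have hfc : Continuous (fun x : ℝ => f (x : AddCircle (1:ℝ))) :=
      f.continuous.comp (AddCircle.continuous_mk' 1)
    obtain ⟨v, v', hvp, h1, h2⟩ := aux_second (Real.sqrt M) (Real.sqrt_ne_zero'.2 hM)
      (fun x : ℝ => N (f (x : AddCircle (1:ℝ))) - h x) ((hNc.comp hfc).sub hh)
      (fun x => by simp [hhp x])
    have hc : Continuous v := continuous_iff_continuousAt.2 fun x => (h1 x).continuousAt
    refine ⟨⟨hvp.lift, ?_⟩, v', ?_, ?_⟩
    · exact continuous_coinduced_dom.2 hc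
    · intro x; exact h1 x
    · intro x; have := h2 x
      rw [Real.sq_sqrt hM.le] at this
      exact this
  choose T T' hT1 hT2 using key
  have hLM0 : 0 ≤ L / M := div_nonneg hL0 hM.le
  have hcontr : ContractingWith (L / M).toNNReal T := by
    refine ⟨?_, LipschitzWith.of_dist_le_mul fun f g => ?_⟩
    · rw [← NNReal.coe_lt_coe, Real.coe_toNNReal _ hLM0]; exact (div_lt_one hM).2 hLM
    · rw [Real.coe_toNNReal _ hLM0, ContinuousMap.dist_le (mul_nonneg hLM0 dist_nonneg)]
      intro z
      induction z using QuotientAddGroup.induction_on with | _ x =>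
      have := aux_bound M (L * dist f g) hM
        (fun x : ℝ => T f (x : AddCircle (1:ℝ)) - T g (x : AddCircle (1:ℝ)))
        (fun x => T' f x - T' g x)
        (fun x : ℝ => N (f (x : AddCircle (1:ℝ))) - N (g (x : AddCircle (1:ℝ))))
        (fun x => by simp) (fun x => (hT1 f x).sub (hT1 g x))
        (fun x => by
          exact ((hT2 f x).sub (hT2 g x)).congr_deriv (by ring))
        (fun x => (hN _ _).trans (mul_le_mul_of_nonneg_left
          (by rw [← Real.dist_eq]; exact ContinuousMap.dist_apply_le_dist _) hL0)) x
      rw [Real.dist_eq]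
      refine this.trans (le_of_eq ?_)
      ring
  have hfix := hcontr.fixedPoint_isFixedPt
  set f := ContractingWith.fixedPoint T hcontr
  have hfix : T f = f := hfix
  refine ⟨fun x : ℝ => f (x : AddCircle (1:ℝ)), T' f, fun x => by simp, ?_, ?_⟩
  · intro x; have := hT1 f x; rwa [hfix] at this
  · intro x; have := hT2 f x; rw [hfix] at this
    convert this using 1; ring

lemma aux_bdd (w : ℝ → ℝ) (hc : Continuous w) (hp : Function.Periodic w 1) :
    ∃ W, 0 < W ∧ ∀ x, |w x| ≤ W := by
  obtain ⟨W, hW⟩ := isCompact_Icc.exists_bound_of_continuousOn (hc.continuousOn (s := Set.Icc (0:ℝ) 1))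
  refine ⟨max W 1, by positivity, fun x => ?_⟩
  obtain ⟨y, hy, hxy⟩ := hp.exists_mem_Ico₀ one_pos x
  rw [hxy]
  exact (hW y (Set.Ico_subset_Icc_self hy)).trans (le_max_left _ _)

lemma aux_sing (κ : ℝ) (hκ : 0 < κ) (h : ℝ → ℝ) (hh : ContDiff ℝ (⊤ : ℕ∞) h)
    (hp : Function.Periodic h 1) (hint : ∫ x in (0 : ℝ)..1, h x = κ) :
    ∃ v : ℝ → ℝ, ContDiff ℝ (⊤ : ℕ∞) v ∧ Function.Periodic v 1 ∧ (∀ x, 0 < v x) ∧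
      (∀ x, deriv (deriv v) x = h x - κ / v x) ∧ ∫ x in (0 : ℝ)..1, 1 / v x = 1 := by
  have hhc := hh.continuous
  obtain ⟨w, w', hw, hwp, hw1, hw2⟩ := aux_prim2 (fun x => h x - κ) (hh.sub contDiff_const)
    (fun x => by simp [hp x]) (by
      rw [intervalIntegral.integral_sub (hhc.intervalIntegrable _ _) (by simp), hint]; simp)
  obtain ⟨W, hW0, hW⟩ := aux_bdd w hw.continuous hwp
  obtain ⟨H0, hH00, hH0⟩ := aux_bdd h hhc hp
  set H := H0 + κ with hH
  have hHκ : κ < H := by linarith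
  have hHpos : 0 < H := by linarith
  set lo := κ / H with hlo
  have hlo0 : 0 < lo := by positivity
  have hlo1 : lo < 1 := (div_lt_one hHpos).2 hHκ
  have hκlo : κ / lo = H := by rw [hlo]; field_simp
  set hi := 1 + 2 * W with hhi
  have hhi1 : 1 < hi := by linarith
  set M := κ / lo ^ 2 with hM
  have hM0 : 0 < M := by positivity
  set q : ℝ → ℝ := fun x => max lo (min x hi) with hq
  have hqlo : ∀ x, lo ≤ q x := fun x => le_max_left _ _
  have hqhi : ∀ x, q x ≤ hi := fun x => max_le (by linarith) (min_le_right _ _)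
  have hq0 : ∀ x, 0 < q x := fun x => hlo0.trans_le (hqlo x)
  have hqL : ∀ x y, |q x - q y| ≤ |x - y| := by
    intro x y
    have h1 := abs_max_sub_max_le_max lo (min x hi) lo (min y hi)
    have h2 := abs_min_sub_min_le_max x hi y hi
    simp only [sub_self, abs_zero] at h1 h2
    rw [max_eq_right (abs_nonneg (min x hi - min y hi))] at h1
    rw [max_eq_left (abs_nonneg (x - y))] at h2
    exact h1.trans h2
  have hLM : κ / hi ^ 2 ≤ M := by
    rw [hM]; gcongr; linarith
  obtain ⟨v, v', hvp, hv1, hv2⟩ := aux_fixed M (M - κ / hi ^ 2) (by linarith)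
    (by have : 0 < κ / hi ^ 2 := by positivity
        linarith) (fun x => M * q x + κ / q x) h (by
      intro x y
      have e : M * q x + κ / q x - (M * q y + κ / q y) = (M - κ / (q x * q y)) * (q x - q y) := by
        have := (hq0 x).ne'
        have := (hq0 y).ne'
        field_simp; ring
      have b1 : κ / hi ^ 2 ≤ κ / (q x * q y) := by
        rw [pow_two]; gcongr
        · exact hqhi x
        · exact hqhi y
      have b2 : κ / (q x * q y) ≤ M := by
        rw [hM, pow_two]; gcongr
        · exact hqlo x
        · exact hqlo y
      rw [e, abs_mul, abs_of_nonneg (by linarith)]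
      exact mul_le_mul (by linarith) (hqL x y) (abs_nonneg _) (by linarith)) hhc hp
  -- lower bound
  have hvlo : ∀ x, lo ≤ v x := by
    obtain ⟨a, ha, -, ha'⟩ := aux_min v v' _ hvp hv1 hv2
    intro x
    refine le_trans ?_ (ha x)
    by_contra! hlt
    have hqa : q (v a) = lo := by
      simp only [hq]; rw [min_eq_left (by linarith), max_eq_left hlt.le]
    simp only [hqa, hκlo] at ha'
    have := (abs_le.1 (hH0 a)).2
    have := mul_lt_mul_of_pos_left hlt hM0
    linarith
  have hvhi : ∀ x, v x ≤ hi := by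
    obtain ⟨a, ha, -, ha'⟩ := aux_max (fun x => v x - w x) (fun x => v' x - w' x) _
      (fun x => by simp [hvp x, hwp x]) (fun x => (hv1 x).sub (hw1 x)) (fun x => (hv2 x).sub (hw2 x))
    have ha1 : v a ≤ 1 := by
      by_contra! hlt
      have hq1 : 1 < q (v a) := lt_max_of_lt_right (lt_min hlt hhi1)
      have hqv : q (v a) ≤ v a := max_le (by linarith) (min_le_left _ _)
      have : κ / q (v a) < κ := div_lt_self hκ hq1
      have := mul_le_mul_of_nonneg_left hqv hM0.le
      linarith
    intro x
    have h1 := ha x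
    have h2 := abs_le.1 (hW x)
    have h3 := abs_le.1 (hW a)
    linarith
  have hv0 : ∀ x, 0 < v x := fun x => hlo0.trans_le (hvlo x)
  have hv2' : ∀ x, HasDerivAt v' (h x - κ / v x) x := by
    intro x
    have hqa : q (v x) = v x := by
      simp only [hq]; rw [min_eq_left (hvhi x), max_eq_right (hvlo x)]
    refine (hv2 x).congr_deriv ?_
    rw [hqa]; ring
  have hd1 : deriv v = v' := funext fun x => (hv1 x).deriv
  have hd2 : deriv v' = fun x => h x - κ / v x := funext fun x => (hv2' x).deriv
  have hsm : ∀ n : ℕ, ContDiff ℝ n v := by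
    intro n
    induction n with
    | zero => 
      exact contDiff_zero.2 (continuous_iff_continuousAt.2 fun x => (hv1 x).continuousAt)
    | succ n ih =>
      have h2 : ContDiff ℝ ((n : ℕ) + 1) v' := by
        rw [contDiff_succ_iff_deriv]
        refine ⟨fun x => (hv2' x).differentiableAt, by simp, ?_⟩
        rw [hd2]
        exact (hh.of_le (by exact_mod_cast le_top)).sub (contDiff_const.div ih fun x => (hv0 x).ne')
      push_cast
      rw [contDiff_succ_iff_deriv]
      refine ⟨fun x => (hv1 x).differentiableAt, by simp, ?_⟩
      rw [hd1]
      exact h2.of_le (by exact_mod_cast Nat.le_succ n)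
  have hvc := (hsm 0).continuous
  refine ⟨v, contDiff_infty.2 hsm, hvp, hv0, fun x => by rw [hd1, hd2], ?_⟩
  have hc1 : Continuous fun x => 1 / v x := continuous_const.div hvc fun x => (hv0 x).ne'
  have hc2 : Continuous fun x => h x - κ / v x :=
    hhc.sub (continuous_const.div hvc fun x => (hv0 x).ne')
  have hF := intervalIntegral.integral_eq_sub_of_hasDerivAt (fun x _ => hv2' x)
    (hc2.intervalIntegrable 0 1)
  have hv'p : v' 1 = v' 0 := by
    have h1 : HasDerivAt (fun x => v (x + 1)) (v' 1) 0 := by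
      have := HasDerivAt.comp_add_const (0:ℝ) 1 (by simpa using hv1 (0+1))
      simpa using this
    have h2 : (fun x => v (x + 1)) = v := funext hvp
    rw [h2] at h1
    exact h1.unique (hv1 0)
  have e : (fun x => h x - κ / v x) = fun x => h x - κ * (1 / v x) := by funext x; ring
  rw [hv'p, sub_self, e, intervalIntegral.integral_sub (hhc.intervalIntegrable _ _)
    ((hc1.const_mul κ).intervalIntegrable _ _), intervalIntegral.integral_const_mul, hint] at hF
  have : κ * ((∫ x in (0 : ℝ)..1, 1 / v x) - 1) = 0 := by linarith
  rcases mul_eq_zero.1 this with h | h <;> linarith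

lemma aux_zero (h : ℝ → ℝ) (hh : ContDiff ℝ (⊤ : ℕ∞) h)
    (hp : Function.Periodic h 1) (hint : ∫ x in (0 : ℝ)..1, h x = 0) :
    ∃ v : ℝ → ℝ, ContDiff ℝ (⊤ : ℕ∞) v ∧ Function.Periodic v 1 ∧ (∀ x, 0 < v x) ∧
      (∀ x, deriv (deriv v) x = h x) ∧ ∫ x in (0 : ℝ)..1, 1 / v x = 1 := by
  obtain ⟨w, w', hw, hwp, hw1, hw2⟩ := aux_prim2 h hh hp hint
  obtain ⟨a, ha, ha', -⟩ := aux_min w w' h hwp hw1 hw2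
  obtain ⟨K, hK0, hK⟩ := aux_bdd h hh.continuous hp
  set u : ℝ → ℝ := fun x => w x - w a with hu
  have hu0 : ∀ x, 0 ≤ u x := fun x => sub_nonneg.2 (ha x)
  have huc : Continuous u := hw.continuous.sub continuous_const
  have hup : Function.Periodic u 1 := fun x => by simp [hu, hwp x]
  -- quadratic bound
  have hq1 : ∀ x, a ≤ x → w' x ≤ K * (x - a) := by
    intro x hx
    have hm : Monotone fun x => K * (x - a) - w' x := by
      apply monotone_of_hasDerivAt_nonneg (f' := fun x => K - h x)
      · intro y
        exact ((((hasDerivAt_id y).sub_const a).const_mul K).sub (hw2 y)).congr_deriv (by simp)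
      · intro y; have := (abs_le.1 (hK y)).2
        simp; linarith
    have := hm hx
    simp only [ha', sub_self, mul_zero] at this
    linarith
  have hq2 : ∀ x, a ≤ x → u x ≤ K * (x - a) ^ 2 := by
    intro x hx
    have hd : ∀ y, HasDerivAt (fun x => K * (x - a) ^ 2 - w x) (K * (2 * (y - a)) - w' y) y := by
      intro y
      exact (((((hasDerivAt_id y).sub_const a).pow 2).const_mul K).sub (hw1 y)).congr_deriv (by simp)
    have hm : MonotoneOn (fun x => K * (x - a) ^ 2 - w x) (Set.Ici a) := by
      apply monotoneOn_of_deriv_nonneg (convex_Ici a)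
      · exact fun y _ => (hd y).continuousAt.continuousWithinAt
      · exact fun y _ => (hd y).differentiableAt.differentiableWithinAt
      · intro y hy
        rw [interior_Ici] at hy
        have hy : a < y := hy
        rw [(hd y).deriv]
        have := hq1 y hy.le
        have : 0 ≤ K * (y - a) := mul_nonneg hK0.le (by linarith)
        linarith
    have := hm (Set.mem_Ici.2 le_rfl) (Set.mem_Ici.2 hx) hx
    simp only [sub_self] at this
    simp only [hu]; linarith
  set d := 1 / (K + 1) with hd
  have hd0 : 0 < d := by positivity
  have hd1 : d ≤ 1 := (div_le_one (by linarith)).2 (by linarith)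
  set C0 := d ^ 2 with hC0
  have hC00 : 0 < C0 := by positivity
  have hC01 : C0 ≤ 1 := pow_le_one₀ hd0.le hd1
  set I : ℝ → ℝ := fun C => ∫ x in (0:ℝ)..1, 1 / (u x + max C C0) with hI
  have hpos : ∀ x C, 0 < u x + max C C0 := fun x C => 
    add_pos_of_nonneg_of_pos (hu0 x) (lt_max_of_lt_right hC00)
  have hIc : Continuous I := by
    apply intervalIntegral.continuous_parametric_intervalIntegral_of_continuous'
    simp only [Function.uncurry_def]
    apply Continuous.div continuous_const
    · fun_prop
    · exact fun p => (hpos _ _).ne'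
  have hfc : ∀ C, Continuous fun x => 1 / (u x + max C C0) := fun C =>
    continuous_const.div (huc.add continuous_const) fun x => (hpos x C).ne'
  have hI1 : I 1 ≤ 1 := by
    have : I 1 ≤ ∫ x in (0:ℝ)..1, (1:ℝ) := by
      apply intervalIntegral.integral_mono_on zero_le_one ((hfc 1).intervalIntegrable _ _) (by simp)
      intro x _
      rw [max_eq_left hC01, div_le_one (by linarith [hu0 x])]
      linarith [hu0 x]
    simpa using this
  have hI0 : 1 ≤ I C0 := by
    have hper : Function.Periodic (fun x => 1 / (u x + max C0 C0)) 1 := fun x => by simp [hup x]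
    have e := hper.intervalIntegral_add_eq 0 a
    simp only [zero_add] at e
    have : I C0 = ∫ x in a..(a+1), 1 / (u x + max C0 C0) := e
    rw [this, ← intervalIntegral.integral_add_adjacent_intervals (b := a + d)
      ((hfc C0).intervalIntegrable _ _) ((hfc C0).intervalIntegrable _ _)]
    have h2 : 0 ≤ ∫ x in (a+d)..(a+1), 1 / (u x + max C0 C0) :=
      intervalIntegral.integral_nonneg (by linarith) fun x _ => (div_pos one_pos (hpos x C0)).le
    have h1 : ∫ x in a..(a+d), (1 / d) ≤ ∫ x in a..(a+d), 1 / (u x + max C0 C0) := by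
      apply intervalIntegral.integral_mono_on (by linarith) (by simp) ((hfc C0).intervalIntegrable _ _) 
      intro x hx
      apply one_div_le_one_div_of_le (hpos x C0)
      rw [max_self]
      have h3 := hq2 x hx.1
      have h4 : (x - a) ^ 2 ≤ d ^ 2 := pow_le_pow_left₀ (by linarith [hx.1]) (by linarith [hx.2]) 2
      have h5 := mul_le_mul_of_nonneg_left h4 hK0.le
      have h6 : K * d ^ 2 + d ^ 2 = d := by rw [hd]; field_simp
      rw [hC0]; linarith
    rw [intervalIntegral.integral_const] at h1
    have : (a + d - a) • (1 / d) = 1 := by simp [hd0.ne']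
    linarith
  obtain ⟨C, hC, hIC⟩ := intermediate_value_Icc' hC01 hIc.continuousOn ⟨hI1, hI0⟩
  have hd1' : deriv (fun x => u x + max C C0) = w' := funext fun x => 
    (((hw1 x).sub_const _).add_const _).deriv
  refine ⟨fun x => u x + max C C0, (hw.sub contDiff_const).add contDiff_const, 
    fun x => by simp [hup x], fun x => hpos x C, fun x => ?_, hIC⟩
  rw [hd1', (hw2 x).deriv]

/-- Solvability of the reduced small radius limit ODE on the abelian
    surface with one-variable data, under det F⁰ = ac − b² > 0. -/
theorem stmt_16 (α a b c : ℝ) (hα : 0 < α) (hdet : 0 < a * c - b ^ 2)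
    (A : ℝ → ℝ) (hA : ContDiff ℝ (⊤ : ℕ∞) A) (hAper : Function.Periodic A 1)
    (hint : ∫ x in (0 : ℝ)..1, A x = -(α * (a * c - b ^ 2))) :
    ∃ φ : ℝ → ℝ, ContDiff ℝ (⊤ : ℕ∞) φ ∧ Function.Periodic φ 1 ∧
      (∀ x, 0 < 1 + deriv (deriv φ) x) ∧
      ∀ x, -(1 / 4) * deriv (deriv (fun y => 1 / (1 + deriv (deriv φ) y))) x
            - α * b ^ 2 * (a * c - b ^ 2) * (1 + deriv (deriv φ) x) / (b ^ 2 + c ^ 2)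
            - α * c ^ 2 * (a * c - b ^ 2) / (b ^ 2 + c ^ 2) = A x := by
  have hc : c ≠ 0 := by
    rintro rfl
    nlinarith [sq_nonneg b]
  have hbc : 0 < b ^ 2 + c ^ 2 := by positivity
  set D := a * c - b ^ 2 with hD
  set κ := 4 * (α * b ^ 2 * D / (b ^ 2 + c ^ 2)) with hκ
  set μ := α * c ^ 2 * D / (b ^ 2 + c ^ 2) with hμ
  have hsum : κ / 4 + μ = α * D := by rw [hκ, hμ]; field_simp
  set h : ℝ → ℝ := fun x => -4 * (A x + μ) with hh
  have hhs : ContDiff ℝ (⊤ : ℕ∞) h := contDiff_const.mul (hA.add contDiff_const)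
  have hhp : Function.Periodic h 1 := fun x => by simp [hh, hAper x]
  have hhi : ∫ x in (0 : ℝ)..1, h x = κ := by
    rw [hh, intervalIntegral.integral_const_mul, intervalIntegral.integral_add
      (hA.continuous.intervalIntegrable _ _) (by simp), hint]
    simp; linarith
  have hmain : ∃ v : ℝ → ℝ, ContDiff ℝ (⊤ : ℕ∞) v ∧ Function.Periodic v 1 ∧ (∀ x, 0 < v x) ∧
      (∀ x, deriv (deriv v) x = h x - κ / v x) ∧ ∫ x in (0 : ℝ)..1, 1 / v x = 1 := by
    have hκ0 : 0 ≤ κ := by positivity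
    rcases hκ0.eq_or_lt with h0 | h0
    · rw [← h0] at hhi ⊢
      simpa using aux_zero h hhs hhp hhi
    · exact aux_sing κ h0 h hhs hhp hhi
  obtain ⟨v, hv, hvp, hv0, hv2, hvi⟩ := hmain
  have hs : ContDiff ℝ (⊤ : ℕ∞) fun x => 1 / v x := contDiff_const.div hv fun x => (hv0 x).ne'
  obtain ⟨p, p', hps, hpp, hp1, hp2⟩ := aux_prim2 (fun x => 1 / v x - 1) (hs.sub contDiff_const)
    (fun x => by simp [hvp x]) (by
      rw [intervalIntegral.integral_sub (hs.continuous.intervalIntegrable _ _) (by simp), hvi]; simp)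
  have hd1 : deriv p = p' := funext fun x => (hp1 x).deriv
  have hd2 : ∀ x, 1 + deriv (deriv p) x = 1 / v x := fun x => by
    rw [hd1, (hp2 x).deriv]; ring
  refine ⟨p, hps, hpp, fun x => ?_, fun x => ?_⟩
  · rw [hd2]; exact div_pos one_pos (hv0 x)
  · simp only [hd2, one_div_one_div, hv2]
    have e1 : α * b ^ 2 * D * (1 / v x) / (b ^ 2 + c ^ 2) = κ / 4 / v x := by
      rw [hκ]; have := (hv0 x).ne'; field_simp
    rw [e1, hh]; ring
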